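/- arXiv:1302.4244 — 2 statements merged into one kernel-verified Lean document; each statement's English description precedes it below -/
import Mathlib

section
/- Let τ ∈ (0,1) and let ε be a real random variable with distribution function F satisfying F(0) = τ. Then for every real number h, the (bounded, hence integrable) function x ↦ ρ_τ(x + h) − ρ_τ(x) has nonnegative expectation: E[ρ_τ(ε + h) − ρ_τ(ε)] ≥ 0. -/
/-!
The check function is convex, and `τ - 1_{x ≤ 0}` is a subgradient of it at `x`, so
`ρ_τ(x + h) - ρ_τ(x) ≥ h (τ - 1_{x ≤ 0})` pointwise (`rho_subgradient`). At `x = ε` the right-hand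
side has expectation `h (τ - P(ε ≤ 0)) = 0`. The increment is bounded by `|h|`
(`abs_rho_sub_le`), hence integrable, so the pointwise bound can be integrated.
-/

open MeasureTheory

/-- The check (quantile loss) function `ρ_τ(r) = r(τ·1_{r>0} − (1−τ)·1_{r≤0})`. -/
noncomputable def rho (τ r : ℝ) : ℝ := if 0 < r then τ * r else (τ - 1) * r

lemma rho_subgradient (τ x h : ℝ) :
    h * (τ - (Set.Iic (0 : ℝ)).indicator 1 x) ≤ rho τ (x + h) - rho τ x := by
  simp only [rho, Set.indicator, Set.mem_Iic, Pi.one_apply]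
  split_ifs <;> linarith

lemma abs_rho_sub_le {τ : ℝ} (hτ : τ ∈ Set.Ioo (0 : ℝ) 1) (x h : ℝ) :
    |rho τ (x + h) - rho τ x| ≤ |h| := by
  obtain ⟨h0, h1⟩ := hτ
  simp only [rho]
  rw [abs_le]
  rcases abs_cases h with ⟨e, _⟩ | ⟨e, _⟩ <;> rw [e] <;> split_ifs <;> constructor <;> nlinarith

lemma measurable_rho (τ : ℝ) : Measurable (rho τ) :=
  Measurable.ite measurableSet_Ioi (by fun_prop) (by fun_prop)

/-- if `P(ε ≤ 0) = τ`, then `E[ρ_τ(ε + h) − ρ_τ(ε)] ≥ 0` for every `h`. -/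
theorem expectation_check_increment_nonneg
    {Ω : Type*} [MeasurableSpace Ω] (P : Measure Ω) [IsProbabilityMeasure P]
    (τ : ℝ) (hτ : τ ∈ Set.Ioo (0 : ℝ) 1)
    (ε : Ω → ℝ) (hε : Measurable ε)
    (hF0 : P {ω | ε ω ≤ 0} = ENNReal.ofReal τ)
    (h : ℝ) :
    0 ≤ ∫ ω, (rho τ (ε ω + h) - rho τ (ε ω)) ∂P := by
  have hS : MeasurableSet {ω | ε ω ≤ 0} := hε measurableSet_Iic
  have hint : Integrable (fun ω => rho τ (ε ω + h) - rho τ (ε ω)) P := by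
    refine Integrable.of_bound (C := |h|) ?_ (ae_of_all _ fun ω => abs_rho_sub_le hτ _ _)
    exact (((measurable_rho τ).comp (hε.add_const h)).sub
      ((measurable_rho τ).comp hε)).aestronglyMeasurable
  have hind : Integrable ({ω | ε ω ≤ 0}.indicator (1 : Ω → ℝ)) P :=
    (integrable_const (1 : ℝ)).indicator hS
  have hzero : ∫ ω, h * (τ - {ω | ε ω ≤ 0}.indicator (1 : Ω → ℝ) ω) ∂P = 0 := by
    rw [integral_const_mul, integral_sub (integrable_const τ) hind, integral_indicator_one hS,
      measureReal_def, hF0, ENNReal.toReal_ofReal hτ.1.le]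
    simp
  rw [← hzero]
  exact integral_mono (((integrable_const τ).sub hind).const_mul h) hint
    fun ω => rho_subgradient τ (ε ω) h
end

section
/- Let τ ∈ (0,1) and let μ be a probability measure on ℝ with μ((−∞,0]) = τ. Then for every h ≥ 0, ∫ (ρ_τ(x + h) − ρ_τ(x)) dμ(x) = ∫_{(−h,0]} (h + x) dμ(x). -/
/-!
Pointwise, `ρ_τ(x + h) - ρ_τ(x) = τ h - h 1_{x ≤ 0} + (h + x) 1_{-h < x ≤ 0}` for `h ≥ 0`.
Every term on the right is bounded, hence integrable, and the first two have integrals `τ h` and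
`-h μ((-∞, 0]) = -τ h`, so only the last one survives.
-/

open MeasureTheory

/-- if `μ((−∞,0]) = τ` then for `h ≥ 0`,
`∫ (ρ_τ(x+h) − ρ_τ(x)) dμ = ∫_{(−h,0]} (h + x) dμ`. -/
theorem check_increment_integral_nonneg_shift
    (τ : ℝ) (hτ : τ ∈ Set.Ioo (0 : ℝ) 1)
    (μ : Measure ℝ) [IsProbabilityMeasure μ]
    (hF0 : μ (Set.Iic 0) = ENNReal.ofReal τ)
    (h : ℝ) (hh : 0 ≤ h) :
    ∫ x, (rho τ (x + h) - rho τ x) ∂μ = ∫ x in Set.Ioc (-h) 0, (h + x) ∂μ := by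
  -- Splits the increment into a constant, a half-line indicator and the target integrand.
  have key : ∀ x, rho τ (x + h) - rho τ x =
      (τ * h - (Set.Iic (0 : ℝ)).indicator (fun _ => h) x)
        + (Set.Ioc (-h) 0).indicator (fun x => h + x) x := by
    intro x
    simp only [rho, Set.indicator_apply, Set.mem_Iic, Set.mem_Ioc]
    split_ifs <;> grind
  have hi : Integrable ((Set.Iic (0 : ℝ)).indicator (fun _ => h)) μ :=
    (integrable_const h).indicator measurableSet_Iic
  have hj : Integrable ((Set.Ioc (-h) 0).indicator (fun x => h + x)) μ := by
    rw [integrable_indicator_iff measurableSet_Ioc]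
    refine Measure.integrableOn_of_bounded (M := h) (measure_ne_top _ _) (by fun_prop) ?_
    refine (ae_restrict_iff' measurableSet_Ioc).2 (.of_forall fun x hx => ?_)
    rw [Real.norm_eq_abs, abs_le]
    constructor <;> linarith [hx.1, hx.2]
  have hk : Integrable
      (fun x => τ * h - (Set.Iic (0 : ℝ)).indicator (fun _ => h) x) μ :=
    (integrable_const _).sub hi
  have hμ : μ.real (Set.Iic 0) = τ := by
    rw [measureReal_def, hF0, ENNReal.toReal_ofReal hτ.1.le]
  -- The first two terms cancel in the mean because `μ (Iic 0) = τ`.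
  simp_rw [key]
  rw [integral_add hk hj, integral_sub (integrable_const _) hi,
    integral_indicator measurableSet_Iic, integral_indicator measurableSet_Ioc]
  simp [hμ]
end
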